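/- There exists a differentiable function θ : ℝ → ℝ such that θ′(s) = g(s), κ(s) = f(s)·cos θ(s), and τ(s) = f(s)·sin θ(s) for all s ∈ ℝ. -/

import Mathlib

open RealInnerProductSpace

/-- Cross product on `EuclideanSpace ℝ (Fin 3)`. -/
noncomputable def cross3 (u v : EuclideanSpace ℝ (Fin 3)) : EuclideanSpace ℝ (Fin 3) :=
  (EuclideanSpace.equiv (Fin 3) ℝ).symm
    (crossProduct ((EuclideanSpace.equiv (Fin 3) ℝ) u) ((EuclideanSpace.equiv (Fin 3) ℝ) v))

/-- Determinant of the 3×3 matrix whose rows are the given vectors. -/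
noncomputable def det3 (u v w : EuclideanSpace ℝ (Fin 3)) : ℝ :=
  Matrix.det (Matrix.of ![(EuclideanSpace.equiv (Fin 3) ℝ) u,
    (EuclideanSpace.equiv (Fin 3) ℝ) v, (EuclideanSpace.equiv (Fin 3) ℝ) w])

/-- The cross product of differentiable curves is differentiable. -/
theorem Differentiable.cross3 {u v : ℝ → EuclideanSpace ℝ (Fin 3)}
    (hu : Differentiable ℝ u) (hv : Differentiable ℝ v) :
    Differentiable ℝ (fun s => cross3 (u s) (v s)) := by
  have hu' := differentiable_euclidean.1 hu
  have hv' := differentiable_euclidean.1 hv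
  refine differentiable_euclidean.2 fun i => ?_
  fin_cases i <;> simp [_root_.cross3, cross_apply] <;> fun_prop

/-- The point `(x, y)` with `0 < x` has polar angle `arctan (y / x)`. -/
theorem Real.sqrt_mul_cos_sin_arctan_div {x : ℝ} (hx : 0 < x) (y : ℝ) :
    x = √(x ^ 2 + y ^ 2) * Real.cos (Real.arctan (y / x)) ∧
      y = √(x ^ 2 + y ^ 2) * Real.sin (Real.arctan (y / x)) := by
  have hsqrt : √(1 + (y / x) ^ 2) = √(x ^ 2 + y ^ 2) / x := by
    rw [show 1 + (y / x) ^ 2 = (x ^ 2 + y ^ 2) / x ^ 2 by field_simp,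
      Real.sqrt_div (by positivity), Real.sqrt_sq hx.le]
  have hpos : 0 < √(x ^ 2 + y ^ 2) := by positivity
  rw [Real.cos_arctan, Real.sin_arctan, hsqrt]
  constructor <;> field_simp

theorem stmt_3
    (α : ℝ → EuclideanSpace ℝ (Fin 3))
    (hα : ContDiff ℝ (⊤ : ℕ∞) α)
    (hunit : ∀ s, ‖deriv α s‖ = 1)
    (T : ℝ → EuclideanSpace ℝ (Fin 3)) (hT : ∀ s, T s = deriv α s)
    (κ : ℝ → ℝ) (hκ : ∀ s, κ s = ‖deriv (deriv α) s‖) (hκpos : ∀ s, 0 < κ s)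
    (N : ℝ → EuclideanSpace ℝ (Fin 3)) (hN : ∀ s, N s = (κ s)⁻¹ • deriv (deriv α) s)
    (B : ℝ → EuclideanSpace ℝ (Fin 3)) (hB : ∀ s, B s = cross3 (T s) (N s))
    (τ : ℝ → ℝ) (hτ : ∀ s, τ s = ⟪deriv N s, B s⟫)
    (f : ℝ → ℝ) (hf : ∀ s, f s = Real.sqrt (κ s ^ 2 + τ s ^ 2))
    (g : ℝ → ℝ) (hg : ∀ s, g s = κ s ^ 2 / (κ s ^ 2 + τ s ^ 2) * deriv (fun u => τ u / κ u) s)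
    (C : ℝ → EuclideanSpace ℝ (Fin 3))
    (hC : ∀ s, C s = (Real.sqrt (κ s ^ 2 + τ s ^ 2))⁻¹ • ((-κ s) • T s + τ s • B s))
    (W : ℝ → EuclideanSpace ℝ (Fin 3))
    (hW : ∀ s, W s = (Real.sqrt (κ s ^ 2 + τ s ^ 2))⁻¹ • (τ s • T s + κ s • B s)) :
    ∃ θ : ℝ → ℝ, Differentiable ℝ θ ∧
      ∀ s : ℝ, deriv θ s = g s ∧ κ s = f s * Real.cos (θ s) ∧ τ s = f s * Real.sin (θ s) := by
  have hα₁ : ContDiff ℝ 3 (deriv α) := ((contDiff_succ_iff_deriv (n := 3)).1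
    (by exact_mod_cast contDiff_infty.1 hα (3 + 1))).2.2
  have hα₂ : ContDiff ℝ 2 (deriv (deriv α)) := ((contDiff_succ_iff_deriv (n := 2)).1 hα₁).2.2
  have hκsmooth : ContDiff ℝ 2 κ := by
    rw [funext hκ]
    exact hα₂.norm ℝ fun s => norm_pos_iff.1 (hκ s ▸ hκpos s)
  have hκne : ∀ s, κ s ≠ 0 := fun s => (hκpos s).ne'
  have hNsmooth : ContDiff ℝ 2 N := by
    rw [funext hN]
    exact (hκsmooth.inv hκne).smul hα₂
  have hN' : Differentiable ℝ (deriv N) :=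
    (((contDiff_succ_iff_deriv (n := 1)).1 hNsmooth).2.2).differentiable one_ne_zero
  have hBdiff : Differentiable ℝ B := by
    rw [funext hB, funext hT]
    exact (hα₁.differentiable (by norm_num)).cross3 (hNsmooth.differentiable two_ne_zero)
  have hτdiff : Differentiable ℝ τ := by
    rw [funext hτ]
    exact hN'.inner ℝ hBdiff
  have hratio : Differentiable ℝ (fun u => τ u / κ u) :=
    hτdiff.div (hκsmooth.differentiable two_ne_zero) hκne
  refine ⟨fun s => Real.arctan (τ s / κ s), hratio.arctan, fun s => ⟨?_, ?_⟩⟩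
  · rw [(hratio s).hasDerivAt.arctan.deriv, hg]
    have := hκpos s
    congr 1
    field_simp
  · rw [hf]
    exact Real.sqrt_mul_cos_sin_arctan_div (hκpos s) (τ s)
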